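/- arXiv:1802.07837 — 4 statements merged into one kernel-verified Lean document; each statement's English description precedes it below -/
import Mathlib

section
/- Let n ≥ 5 and let G be a subgroup of the symmetric group Sₙ of index n. Then up to conjugacy either G is the stabilizer of a point (isomorphic to Sₙ₋₁), or n = 6 and G acts on {1,...,6} as PGL₂(5) acts on the projective line over GF(5). -/
/-!
Let `G` be a subgroup of `Perm α` of index `n = |α| ≥ 5`. The action on the cosets of `G` is
faithful, because a nontrivial kernel would contain the alternating group; so `G` is the preimage
of a point stabilizer under an isomorphism `e` of symmetric groups of degree `n`.

Comparing the orders of centralizers, `e` sends transpositions to transpositions unless `n = 6` and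
it sends them to products of three disjoint transpositions. In the first case `e` carries each
point stabilizer, which is generated by transpositions, to a point stabilizer; hence `e` is induced
by a bijection of the points, and `G` is a point stabilizer. In the second case, the quotient
`q⁻¹ ∘ e` of two such isomorphisms sends transpositions to transpositions, so it is induced by a
bijection: any two subgroups of index `6` that are not point stabilizers correspond under a
bijection of the points. The image of `GL₂(5)` in `Perm ℙ¹(GF(5))` is such a subgroup, since it is
transitive of order `480 / 4 = 120`.
-/

open Equiv Projectivization

instance : Fact (Nat.Prime 5) := ⟨by norm_num⟩

abbrev ProjLine5 := Projectivization (ZMod 5) (Fin 2 → ZMod 5)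

/-- The linear automorphism of `GF(5)²` given by a matrix in `GL₂(GF(5))`. -/
noncomputable def glLin : GL (Fin 2) (ZMod 5) →* ((Fin 2 → ZMod 5) ≃ₗ[ZMod 5] (Fin 2 → ZMod 5)) :=
  (LinearMap.GeneralLinearGroup.generalLinearEquiv (ZMod 5) (Fin 2 → ZMod 5)).toMonoidHom.comp
    (Matrix.GeneralLinearGroup.toLin).toMonoidHom

lemma glLin_comp (g h : GL (Fin 2) (ZMod 5)) :
    (glLin g).toLinearMap.comp (glLin h).toLinearMap = (glLin (g * h)).toLinearMap := by
  ext v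
  simp [map_mul]

lemma glLin_one : (glLin (1 : GL (Fin 2) (ZMod 5))).toLinearMap = LinearMap.id := by
  ext v
  simp [map_one]

lemma pmap_congr {A B : (Fin 2 → ZMod 5) →ₗ[ZMod 5] (Fin 2 → ZMod 5)}
    (hA : Function.Injective A) (hB : Function.Injective B) (hAB : A = B) :
    Projectivization.map A hA = Projectivization.map B hB := by
  subst hAB; rfl

/-- The permutation of the projective line `ℙ¹(GF(5))` induced by an element of
`GL₂(GF(5))`. -/
noncomputable def glPerm (g : GL (Fin 2) (ZMod 5)) : Equiv.Perm ProjLine5 where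
  toFun := Projectivization.map (glLin g).toLinearMap (glLin g).injective
  invFun := Projectivization.map (glLin g⁻¹).toLinearMap (glLin g⁻¹).injective
  left_inv x := by
    have key : (Projectivization.map (glLin g⁻¹).toLinearMap (glLin g⁻¹).injective) ∘
        (Projectivization.map (glLin g).toLinearMap (glLin g).injective) = id := by
      rw [← Projectivization.map_comp,
        pmap_congr _
          (glLin (g⁻¹ * g)).injective (glLin_comp g⁻¹ g),
        pmap_congr (glLin (g⁻¹ * g)).injective (glLin 1).injective (by rw [inv_mul_cancel]),
        pmap_congr (glLin 1).injective Function.injective_id glLin_one,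
        Projectivization.map_id]
    exact congrFun key x
  right_inv x := by
    have key : (Projectivization.map (glLin g).toLinearMap (glLin g).injective) ∘
        (Projectivization.map (glLin g⁻¹).toLinearMap (glLin g⁻¹).injective) = id := by
      rw [← Projectivization.map_comp,
        pmap_congr _
          (glLin (g * g⁻¹)).injective (glLin_comp g g⁻¹),
        pmap_congr (glLin (g * g⁻¹)).injective (glLin 1).injective (by rw [mul_inv_cancel]),
        pmap_congr (glLin 1).injective Function.injective_id glLin_one,
        Projectivization.map_id]
    exact congrFun key x

/-- The action homomorphism `GL₂(GF(5)) → Sym(ℙ¹(GF(5)))`; its image is `PGL₂(5)` acting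
on the projective line. -/
noncomputable def glPermHom : GL (Fin 2) (ZMod 5) →* Equiv.Perm ProjLine5 where
  toFun := glPerm
  map_one' := by
    ext x
    show Projectivization.map (glLin 1).toLinearMap (glLin 1).injective x = x
    rw [pmap_congr (glLin 1).injective Function.injective_id glLin_one,
      Projectivization.map_id]
    rfl
  map_mul' g h := by
    ext x
    show Projectivization.map (glLin (g * h)).toLinearMap (glLin (g * h)).injective x = _
    have key : Projectivization.map (glLin (g * h)).toLinearMap (glLin (g * h)).injective =
        (Projectivization.map (glLin g).toLinearMap (glLin g).injective) ∘
          (Projectivization.map (glLin h).toLinearMap (glLin h).injective) := by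
      rw [← Projectivization.map_comp,
        pmap_congr _
          (glLin (g * h)).injective (glLin_comp g h)]
    exact congrFun key x

/-- Transport of permutation groups along a bijection, as a group homomorphism. -/
def permCongrHom {α β : Type*} (f : α ≃ β) : Equiv.Perm α →* Equiv.Perm β where
  toFun σ := f.symm.trans (σ.trans f)
  map_one' := by ext x; simp
  map_mul' σ τ := by ext x; simp

/-- The copy of `PGL₂(5)` inside the symmetric group on `Fin n`, obtained from an
identification `f` of the `n` points with the projective line over `GF(5)`. -/
noncomputable def pglSubgroup {n : ℕ} (f : Fin n ≃ ProjLine5) : Subgroup (Equiv.Perm (Fin n)) :=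
  glPermHom.range.map (permCongrHom f.symm)

section Arithmetic

open scoped Nat

theorem two_pow_mul_factorial_mul_factorial_lt {k m : ℕ} (h : 1 ≤ k ∧ 1 ≤ m ∨ 3 ≤ k) :
    2 ^ k * (k + 1)! * m ! < (m + 2 * k)! := by
  have hsucc (j : ℕ) (hj : 1 ≤ j) (ih : 2 ^ j * (j + 1)! * m ! < (m + 2 * j)!) :
      2 ^ (j + 1) * (j + 1 + 1)! * m ! < (m + 2 * (j + 1))! := calc
    2 ^ (j + 1) * (j + 1 + 1)! * m ! = 2 * (j + 2) * (2 ^ j * (j + 1)! * m !) := by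
      rw [Nat.factorial_succ (j + 1)]; ring
    _ < (m + 2 * j + 2) * (m + 2 * j + 1) * (m + 2 * j)! :=
      Nat.mul_lt_mul_of_le_of_lt (by nlinarith) ih (by positivity)
    _ = (m + 2 * (j + 1))! := by
      rw [show m + 2 * (j + 1) = m + 2 * j + 1 + 1 by ring, Nat.factorial_succ,
        Nat.factorial_succ, mul_assoc]
  have hpos : 0 < m ! := m.factorial_pos
  rcases h with ⟨hk, hm⟩ | hk
  · induction k, hk using Nat.le_induction with
    | base => calc
        2 ^ 1 * (1 + 1)! * m ! = 4 * m ! := rfl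
        _ < (m + 2) * (m + 1) * m ! := Nat.mul_lt_mul_of_pos_right (by nlinarith) hpos
        _ = (m + 2 * 1)! := by rw [mul_one, Nat.factorial_succ, Nat.factorial_succ, mul_assoc]
    | succ j hj ih => exact hsucc j hj ih
  · induction k, hk using Nat.le_induction with
    | base => calc
        2 ^ 3 * (3 + 1)! * m ! < 6 ! * m ! := Nat.mul_lt_mul_of_pos_right (by decide) hpos
        _ ≤ (6 + m)! :=
          Nat.le_of_dvd (Nat.factorial_pos _) (Nat.factorial_mul_factorial_dvd_factorial_add 6 m)
        _ = (m + 2 * 3)! := by rw [add_comm]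
    | succ j hj ih => exact hsucc j (by lia) ih

theorem eq_zero_or_eq_two_of_two_pow_mul_factorial_mul_factorial_eq {k m : ℕ}
    (h : 2 ^ k * (k + 1)! * m ! = (m + 2 * k)!) : k = 0 ∨ k = 2 ∧ m = 0 := by
  have hlt := mt two_pow_mul_factorial_mul_factorial_lt h.not_lt
  obtain hk | ⟨rfl, rfl⟩ | hkm : k = 0 ∨ k = 1 ∧ m = 0 ∨ k = 2 ∧ m = 0 := by lia
  · exact .inl hk
  · exact absurd h (by decide)
  · exact .inr hkm

end Arithmetic

section Swaps

open Equiv.Perm Subgroup MulAction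

variable {α β : Type*} [DecidableEq α] [DecidableEq β]

theorem isConj_of_isSwap {s t : Perm α} (hs : s.IsSwap) (ht : t.IsSwap) : IsConj s t := by
  obtain ⟨a, b, hab, rfl⟩ := hs
  obtain ⟨c, d, hcd, rfl⟩ := ht
  exact isConj_swap hab hcd

theorem isSwap_of_isConj {s t : Perm α} (hst : IsConj s t) (hs : s.IsSwap) : t.IsSwap := by
  obtain ⟨g, rfl⟩ := isConj_iff.1 hst
  obtain ⟨a, b, hab, rfl⟩ := hs
  exact ⟨g a, g b, by simpa, (swap_apply_apply g a b).symm⟩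

theorem isSwap_map_of_isSwap_map (f : Perm α →* Perm β) {s t : Perm α} (hs : s.IsSwap)
    (ht : t.IsSwap) (hfs : (f s).IsSwap) : (f t).IsSwap :=
  isSwap_of_isConj (f.map_isConj (isConj_of_isSwap hs ht)) hfs

theorem exists_mem_stabilizer_conj_eq {a : α} {s t : Perm α} (hs : s.IsSwap) (ht : t.IsSwap)
    (hsa : s a = a) (hta : t a = a) : ∃ g ∈ stabilizer (Perm α) a, g * s * g⁻¹ = t := by
  obtain ⟨b, c, hbc, rfl⟩ := hs
  obtain ⟨b', c', hbc', rfl⟩ := ht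
  refine ⟨swap (swap b b' c) c' * swap b b', ?_, ?_⟩
  · simp only [mem_stabilizer_iff, Perm.smul_def, Perm.mul_apply]
    grind
  · rw [← swap_apply_apply]
    congr 1
    all_goals simp only [Perm.mul_apply]; grind

variable [Finite α]

theorem closure_isSwap_fixing (a : α) :
    closure {s : Perm α | s.IsSwap ∧ s a = a} = stabilizer (Perm α) a := by
  refine le_antisymm ((closure_le _).2 fun s hs ↦ hs.2) fun g (hg : g a = a) ↦ ?_
  refine (mem_closure_isSwap fun s hs ↦ hs.1).2 ⟨Set.toFinite _, fun b ↦ ?_⟩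
  rcases eq_or_ne (g b) b with hb | hb
  · rw [hb]; exact mem_orbit_self b
  · have hab : a ≠ b := by grind
    have hagb : a ≠ g b := fun h ↦ hab (g.injective (hg.trans h))
    exact ⟨⟨swap b (g b), subset_closure
      ⟨⟨b, g b, hb.symm, rfl⟩, swap_apply_of_ne_of_ne hab hagb⟩⟩, swap_apply_left _ _⟩

theorem exists_closure_le_stabilizer {S : Set (Perm α)} {t : Perm α} (ht : t.IsSwap)
    (htS : t ∈ S) (hS : ∀ s ∈ S, ∃ g ∈ closure S, g * t * g⁻¹ = s) (hS' : closure S ≠ ⊤) :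
    ∃ a : α, closure S ≤ stabilizer (Perm α) a := by
  have hswap (s) (hs : s ∈ S) : s.IsSwap := by
    obtain ⟨g, -, hg⟩ := hS s hs
    exact isSwap_of_isConj (isConj_iff.2 ⟨g, hg⟩) ht
  obtain ⟨b, c, -, rfl⟩ := ht
  obtain ⟨a, ha⟩ : ∃ a, a ∉ orbit (closure S) b := by
    by_contra! h
    have : IsPretransitive (closure S) α :=
      (isPretransitive_iff_orbit_eq_univ b).2 (Set.eq_univ_of_forall h)
    exact hS' (closure_of_isSwap_of_isPretransitive hswap)
  refine ⟨a, (closure_le _).2 fun s hs ↦ ?_⟩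
  obtain ⟨g, hg, rfl⟩ := hS s hs
  -- The conjugate is `swap (g b) (g c)`, and `g b`, `g c` both lie in the orbit of `b`.
  have hgb : g b ≠ a := fun h ↦ ha ⟨⟨g, hg⟩, h⟩
  have hgc : g c ≠ a := fun h ↦
    ha ⟨⟨g * swap b c, mul_mem hg (subset_closure htS)⟩, by simpa [Subgroup.smul_def] using h⟩
  rw [← swap_apply_apply]
  exact swap_apply_of_ne_of_ne hgb.symm hgc.symm

end Swaps

section Isomorphisms

open Equiv.Perm Subgroup MulAction

variable {α β γ : Type*}

theorem card_centralizer_map {G H : Type*} [Group G] [Group H] (e : G ≃* H) (g : G) :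
    Nat.card (centralizer {e g}) = Nat.card (centralizer {g}) :=
  (Nat.card_congr (e.toEquiv.subtypeEquiv fun h ↦ by
    simp [mem_centralizer_singleton_iff, ← map_mul])).symm

open scoped Nat in
theorem card_centralizer_of_cycleType_eq_replicate [Fintype α] [DecidableEq α] {σ : Perm α}
    {k p : ℕ} (h : σ.cycleType = Multiset.replicate k p) :
    Nat.card (centralizer {σ}) = (Nat.card α - k * p)! * p ^ k * k ! := by
  rcases eq_or_ne k 0 with rfl | hk
  · simp [nat_card_centralizer, h]
  · simp [nat_card_centralizer, h, Multiset.toFinset_replicate, hk]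

theorem card_eq_of_perm_mulEquiv [Finite α] [Finite β] (hα : 2 ≤ Nat.card α)
    (e : Perm α ≃* Perm β) : Nat.card α = Nat.card β := by
  have h := Nat.card_congr e.toEquiv
  rwa [Nat.card_perm, Nat.card_perm, Nat.factorial_inj hα] at h

open scoped Nat in
theorem isSwap_map_or_cycleType_map [Finite α] [DecidableEq α] [Fintype β] [DecidableEq β]
    (e : Perm α ≃* Perm β) {s : Perm α} (hs : s.IsSwap) :
    (e s).IsSwap ∨ Nat.card α = 6 ∧ (e s).cycleType = Multiset.replicate 3 2 := by
  cases nonempty_fintype α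
  have hs' : s.cycleType = Multiset.replicate 1 2 := isSwap_iff_cycleType.1 hs
  have hes : orderOf (e s) = 2 := by rw [e.orderOf_eq, hs.orderOf]
  obtain ⟨k, hk⟩ := cycleType_prime_order (σ := e s) (hes ▸ Nat.prime_two)
  rw [hes] at hk
  have hα : 2 ≤ Nat.card α := by simpa [hs'] using s.sum_cycleType_le
  have hβ := card_eq_of_perm_mulEquiv hα e
  obtain ⟨m, hm⟩ : ∃ m, Nat.card α = m + 2 * k + 2 := by
    have := (e s).sum_cycleType_le
    rw [hk, Multiset.sum_replicate, smul_eq_mul, ← Nat.card_eq_fintype_card, ← hβ] at this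
    exact ⟨Nat.card α - 2 * k - 2, by lia⟩
  have hcard := card_centralizer_map e s
  rw [card_centralizer_of_cycleType_eq_replicate hk,
    card_centralizer_of_cycleType_eq_replicate hs', ← hβ, hm,
    show m + 2 * k + 2 - (k + 1) * 2 = m by lia] at hcard
  have hfact : 2 ^ k * (k + 1)! * m ! = (m + 2 * k)! := by
    simp only [one_mul, add_tsub_cancel_right, pow_one, Nat.factorial_one, mul_one] at hcard
    rw [pow_succ] at hcard
    nlinarith
  obtain rfl | ⟨rfl, rfl⟩ :=
    eq_zero_or_eq_two_of_two_pow_mul_factorial_mul_factorial_eq hfact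
  · exact .inl (isSwap_iff_cycleType.2 hk)
  · exact .inr ⟨hm, hk⟩

theorem isSwap_map_map_of_not_isSwap_map [Finite α] [Finite β] [Finite γ] [DecidableEq α]
    [DecidableEq β] [DecidableEq γ] (e : Perm α ≃* Perm β) (f : Perm β ≃* Perm γ)
    {s : Perm α} {t : Perm γ} (hs : s.IsSwap) (ht : t.IsSwap) (hes : ¬(e s).IsSwap)
    (hft : ¬(f.symm t).IsSwap) : (f (e s)).IsSwap := by
  cases nonempty_fintype β
  have he := ((isSwap_map_or_cycleType_map e hs).resolve_left hes).2
  have hf := ((isSwap_map_or_cycleType_map f.symm ht).resolve_left hft).2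
  have hconj : IsConj t (f (e s)) := by
    simpa using f.toMonoidHom.map_isConj (isConj_iff_cycleType_eq.2 (hf.trans he.symm))
  exact isSwap_of_isConj hconj ht

theorem stabilizer_perm_injective (hα : 3 ≤ ENat.card α) :
    Function.Injective (stabilizer (Perm α) : α → Subgroup (Perm α)) := by
  intro a b hab
  by_contra hne
  classical
  obtain ⟨c, hca, hcb⟩ := ENat.exists_ne_ne_of_three_le hα a b
  have hswap : swap b c ∈ stabilizer (Perm α) a := swap_apply_of_ne_of_ne hne hca.symm
  rw [hab, mem_stabilizer_iff, Perm.smul_def, swap_apply_left] at hswap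
  exact hcb hswap

theorem exists_comap_stabilizer_eq_stabilizer [Finite α] [Finite β] [DecidableEq α] [DecidableEq β]
    (hα : 3 ≤ ENat.card α) (e : Perm α ≃* Perm β) (he : ∀ s : Perm α, s.IsSwap → (e s).IsSwap)
    (a : α) : ∃ b : β, (stabilizer (Perm β) b).comap (e : Perm α →* Perm β) =
      stabilizer (Perm α) a := by
  obtain ⟨b, hba, -⟩ := ENat.exists_ne_ne_of_three_le hα a a
  obtain ⟨c, hca, hcb⟩ := ENat.exists_ne_ne_of_three_le hα a b
  have : Nontrivial α := ⟨a, b, hba.symm⟩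
  set F : Set (Perm α) := {s | s.IsSwap ∧ s a = a}
  have hF : closure (e '' F) = (stabilizer (Perm α) a).map (e : Perm α →* Perm β) := by
    rw [← closure_isSwap_fixing, MonoidHom.map_closure]; rfl
  have hbc : swap b c ∈ F := ⟨⟨b, c, hcb.symm, rfl⟩, swap_apply_of_ne_of_ne hba.symm hca.symm⟩
  have hconj : ∀ s ∈ e '' F, ∃ g ∈ closure (e '' F), g * e (swap b c) * g⁻¹ = s := by
    rintro _ ⟨s, hs, rfl⟩
    obtain ⟨g, hg, rfl⟩ := exists_mem_stabilizer_conj_eq hbc.1 hs.1 hbc.2 hs.2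
    exact ⟨e g, hF ▸ mem_map_of_mem _ hg, by simp⟩
  have hcoatom : IsCoatom (stabilizer (Perm α) a) :=
    IsPreprimitive.isCoatom_stabilizer_of_isPreprimitive _ a
  have hne : closure (e '' F) ≠ ⊤ := fun h ↦
    hcoatom.1 (map_injective e.injective ((hF.symm.trans h).trans (map_equiv_top e).symm))
  obtain ⟨d, hd⟩ :=
    exists_closure_le_stabilizer (he _ hbc.1) (Set.mem_image_of_mem e hbc) hconj hne
  rw [hF, map_le_iff_le_comap] at hd
  refine ⟨d, (hcoatom.le_iff_eq fun h ↦ ?_).1 hd⟩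
  obtain ⟨x, y, hxy, -⟩ := he _ hbc.1
  have : Nontrivial β := ⟨x, y, hxy⟩
  exact (IsPreprimitive.isCoatom_stabilizer_of_isPreprimitive (Perm β) d).1
    (comap_injective e.surjective h)

theorem exists_eq_permCongrHom_of_comap_stabilizer_eq (hα : 3 ≤ ENat.card α) (hβ : 3 ≤ ENat.card β)
    (e : Perm α ≃* Perm β)
    (he : ∀ a : α, ∃ b : β, (stabilizer (Perm β) b).comap (e : Perm α →* Perm β) =
      stabilizer (Perm α) a) : ∃ f : α ≃ β, e = f.permCongrHom := by
  choose f hf using he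
  have hf' (a : α) (g : Perm α) : e g (f a) = f a ↔ g a = a := SetLike.ext_iff.1 (hf a) g
  have hequiv (g : Perm α) (a : α) : f (g a) = e g (f a) := by
    refine stabilizer_perm_injective hβ (SetLike.ext fun y ↦ ?_)
    obtain ⟨x, rfl⟩ := e.surjective y
    have := hf' a (g⁻¹ * x * g)
    rw [mem_stabilizer_iff, mem_stabilizer_iff, Perm.smul_def, Perm.smul_def, hf']
    simpa only [map_mul, map_inv, Perm.mul_apply, Perm.inv_eq_iff_eq] using this.symm
  have hinj : Function.Injective f := fun a a' h ↦
    stabilizer_perm_injective hα (by rw [← hf, ← hf, h])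
  have hsurj : Function.Surjective f := fun b ↦ by
    have : Nonempty α := (ENat.one_le_card_iff_nonempty α).1 (le_trans (by norm_num) hα)
    obtain ⟨y, hy⟩ := exists_smul_eq (Perm β) (f (Classical.arbitrary α)) b
    exact ⟨e.symm y (Classical.arbitrary α), by simpa [hequiv] using hy⟩
  let F := Equiv.ofBijective f ⟨hinj, hsurj⟩
  refine ⟨F, MulEquiv.ext fun g ↦ Equiv.ext (F.surjective.forall.2 fun a ↦ ?_)⟩
  calc e g (F a) = F (g a) := (hequiv g a).symm
    _ = F.permCongrHom g (F a) := by simp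

end Isomorphisms

section Index

open Equiv.Perm Subgroup MulAction

variable {α β γ : Type*}

theorem comap_permCongrHom_stabilizer (f : α ≃ β) (b : β) :
    (stabilizer (Perm β) b).comap (f.permCongrHom : Perm α →* Perm β) =
      stabilizer (Perm α) (f.symm b) := by
  ext g
  simp [mem_stabilizer_iff, Equiv.eq_symm_apply]

variable [Finite α]

theorem exists_eq_permCongrHom_of_isSwap_map [Finite β] [DecidableEq α] [DecidableEq β]
    (hα : 3 ≤ Nat.card α) (e : Perm α ≃* Perm β) {s : Perm α} (hs : s.IsSwap) (hes : (e s).IsSwap) :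
    ∃ f : α ≃ β, e = f.permCongrHom := by
  have hβ : 3 ≤ Nat.card β := card_eq_of_perm_mulEquiv (by lia) e ▸ hα
  replace hα : 3 ≤ ENat.card α := by rw [ENat.card_eq_coe_natCard]; exact_mod_cast hα
  replace hβ : 3 ≤ ENat.card β := by rw [ENat.card_eq_coe_natCard]; exact_mod_cast hβ
  exact exists_eq_permCongrHom_of_comap_stabilizer_eq hα hβ e
    (exists_comap_stabilizer_eq_stabilizer hα e fun t ht ↦
      isSwap_map_of_isSwap_map (e : Perm α →* Perm β) hs ht hes)

theorem normalCore_eq_bot_of_two_lt_index (hα : 5 ≤ Nat.card α) {G : Subgroup (Perm α)}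
    (hG : 2 < G.index) : G.normalCore = ⊥ := by
  by_contra hne
  cases nonempty_fintype α
  have := nontrivial_iff_ne_bot _ |>.2 hne
  classical
  have : Nontrivial α := Finite.one_lt_card_iff_nontrivial.1 (by lia)
  have hle := (alternatingGroup_le_of_normal hα inferInstance).trans G.normalCore_le
  have hdvd : G.index ∣ 2 := alternatingGroup.index_eq_two (α := α) ▸ index_dvd_of_le hle
  exact hG.not_ge (Nat.le_of_dvd two_pos hdvd)

theorem exists_comap_stabilizer_eq (hα : 5 ≤ Nat.card α) {G : Subgroup (Perm α)}
    (hG : G.index = Nat.card α) (hγ : Nat.card γ = Nat.card α) (c : γ) :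
    ∃ e : Perm α ≃* Perm γ, (stabilizer (Perm γ) c).comap (e : Perm α →* Perm γ) = G := by
  classical
  have : Finite γ := Nat.finite_of_card_ne_zero (by lia)
  let ρ := toPermHom (Perm α) (Perm α ⧸ G)
  have hquot : Nat.card (Perm α ⧸ G) = Nat.card γ := hG.trans hγ.symm
  have hinj : Function.Injective ρ := by
    rw [← MonoidHom.ker_eq_bot_iff, ← normalCore_eq_ker]
    exact normalCore_eq_bot_of_two_lt_index hα (by lia)
  have hρ : Function.Bijective ρ := (Nat.bijective_iff_injective_and_card ρ).2
    ⟨hinj, by rw [Nat.card_perm, Nat.card_perm, hquot, hγ]⟩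
  obtain ⟨k₀⟩ : Nonempty (Perm α ⧸ G ≃ γ) := Finite.card_eq.1 hquot
  let k := k₀.trans (swap (k₀ ((1 : Perm α) : Perm α ⧸ G)) c)
  have hk : k.symm c = ((1 : Perm α) : Perm α ⧸ G) := by simp [k]
  refine ⟨(MulEquiv.ofBijective ρ hρ).trans k.permCongrHom, ?_⟩
  calc _ = ((stabilizer (Perm γ) c).comap (k.permCongrHom : _ →* Perm γ)).comap ρ := rfl
    _ = (stabilizer (Perm (Perm α ⧸ G)) ((1 : Perm α) : Perm α ⧸ G)).comap ρ := by
      rw [comap_permCongrHom_stabilizer, hk]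
    _ = stabilizer (Perm α) ((1 : Perm α) : Perm α ⧸ G) := rfl
    _ = G := stabilizer_quotient G

variable [Finite β] {G : Subgroup (Perm α)} {P : Subgroup (Perm β)}

theorem card_eq_six_of_forall_ne_stabilizer (hα : 5 ≤ Nat.card α) (hG : G.index = Nat.card α)
    (hG' : ∀ a : α, G ≠ stabilizer (Perm α) a) : Nat.card α = 6 := by
  cases nonempty_fintype α
  classical
  obtain ⟨a, b, hab⟩ := Finite.one_lt_card_iff_nontrivial.1 (by lia : 1 < Nat.card α)
  obtain ⟨e, rfl⟩ := exists_comap_stabilizer_eq hα hG rfl a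
  have hs : (swap a b).IsSwap := ⟨a, b, hab, rfl⟩
  refine ((isSwap_map_or_cycleType_map e hs).resolve_left fun hes ↦ ?_).1
  obtain ⟨f, rfl⟩ := exists_eq_permCongrHom_of_isSwap_map (by lia) e hs hes
  exact hG' _ (comap_permCongrHom_stabilizer f a)

theorem exists_eq_comap_permCongrHom (hα : 5 ≤ Nat.card α) (hαβ : Nat.card α = Nat.card β)
    (hG : G.index = Nat.card α) (hP : P.index = Nat.card β)
    (hG' : ∀ a : α, G ≠ stabilizer (Perm α) a) (hP' : ∀ b : β, P ≠ stabilizer (Perm β) b) :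
    ∃ f : α ≃ β, G = P.comap (f.permCongrHom : Perm α →* Perm β) := by
  classical
  obtain ⟨a, b, hab⟩ := Finite.one_lt_card_iff_nontrivial.1 (by lia : 1 < Nat.card α)
  obtain ⟨c, d, hcd⟩ := Finite.one_lt_card_iff_nontrivial.1 (by lia : 1 < Nat.card β)
  obtain ⟨e, rfl⟩ := exists_comap_stabilizer_eq hα hG rfl a
  obtain ⟨q, rfl⟩ := exists_comap_stabilizer_eq (hαβ ▸ hα) hP hαβ a
  have hs : (swap a b).IsSwap := ⟨a, b, hab, rfl⟩
  have ht : (swap c d).IsSwap := ⟨c, d, hcd, rfl⟩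
  have hes : ¬(e (swap a b)).IsSwap := fun h ↦ by
    obtain ⟨f, rfl⟩ := exists_eq_permCongrHom_of_isSwap_map (by lia) e hs h
    exact hG' _ (comap_permCongrHom_stabilizer f a)
  have hqt : ¬(q (swap c d)).IsSwap := fun h ↦ by
    obtain ⟨f, rfl⟩ := exists_eq_permCongrHom_of_isSwap_map (by lia) q ht h
    exact hP' _ (comap_permCongrHom_stabilizer f a)
  obtain ⟨f, hf⟩ := exists_eq_permCongrHom_of_isSwap_map (by lia) (e.trans q.symm) hs
    (isSwap_map_map_of_not_isSwap_map e q.symm hs ht hes hqt)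
  refine ⟨f, ?_⟩
  rw [← hf, comap_comap]
  congr 1
  ext1 g
  simp

end Index

section ProjectiveLine

open MulAction

theorem card_projLine5 : Nat.card ProjLine5 = 6 := by
  rw [card_of_finrank_two (ZMod 5) (Fin 2 → ZMod 5) (by simp), Nat.card_zmod]

theorem glPermHom_mk (g : GL (Fin 2) (ZMod 5)) {v : Fin 2 → ZMod 5} (hv : v ≠ 0) :
    glPermHom g (.mk (ZMod 5) v hv) = .mk (ZMod 5) (glLin g v) (by simpa) := rfl

theorem ker_glPermHom : glPermHom.ker = Subgroup.center (GL (Fin 2) (ZMod 5)) := by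
  ext g
  rw [Matrix.GeneralLinearGroup.mem_center_iff_val_mem_range_scalar, MonoidHom.mem_ker]
  constructor
  · intro hg
    have heigen (v : Fin 2 → ZMod 5) :
        ¬LinearIndependent (ZMod 5) ![v, (glLin g).toLinearMap v] := by
      by_cases hv : v = 0
      · simp [hv, linearIndependent_fin2]
      · have := DFunLike.congr_fun hg (.mk (ZMod 5) v hv)
        simpa [LinearIndependent.pair_iff' hv, glPermHom_mk, mk_eq_mk_iff'] using this
    obtain ⟨a, ha⟩ := LinearMap.exists_eq_smul_id_of_forall_notLinearIndependent heigen
    refine ⟨a, Matrix.ext_of_mulVec_single fun i ↦ ?_⟩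
    have : g.1.mulVec (Pi.single i 1) = a • Pi.single i 1 := LinearMap.congr_fun ha _
    simp [this, ← Pi.single_smul]
  · rintro ⟨a, ha⟩
    ext p
    induction p using Projectivization.ind with | _ v hv =>
    rw [glPermHom_mk, Perm.one_apply, mk_eq_mk_iff']
    refine ⟨a, ?_⟩
    change _ = g.1.mulVec v
    simp [← ha]

theorem card_center_generalLinearGroup {ι R : Type*} [Fintype ι] [DecidableEq ι] [Nonempty ι]
    [CommRing R] : Nat.card (Subgroup.center (GL ι R)) = Nat.card Rˣ := by
  have hinj : Function.Injective (Matrix.GeneralLinearGroup.scalar ι : Rˣ →* GL ι R) :=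
    fun u v h ↦ Units.ext (Matrix.scalar_inj.1 (congrArg Units.val h))
  rw [Matrix.GeneralLinearGroup.center_eq_range_scalar]
  exact (Nat.card_congr (MonoidHom.ofInjective hinj).toEquiv).symm

theorem index_range_glPermHom : glPermHom.range.index = 6 := by
  have hGL : Nat.card (GL (Fin 2) (ZMod 5)) = 480 := by
    rw [Matrix.card_GL_field]
    simp [Fin.prod_univ_two]
  have hker : Nat.card glPermHom.ker = 4 := by
    rw [ker_glPermHom, card_center_generalLinearGroup, Nat.card_eq_fintype_card, ZMod.card_units]
  have hrange : Nat.card glPermHom.range = 120 := by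
    have := glPermHom.ker.card_mul_index
    rw [Subgroup.index_ker, hker, hGL] at this
    lia
  have hperm : Nat.card (Perm ProjLine5) = 720 := by
    rw [Nat.card_perm, card_projLine5]; rfl
  have := glPermHom.range.card_mul_index
  rw [hrange, hperm] at this
  lia

theorem range_glPermHom_ne_stabilizer (p : ProjLine5) :
    glPermHom.range ≠ stabilizer (Perm ProjLine5) p := by
  intro h
  have : Nontrivial ProjLine5 :=
    Finite.one_lt_card_iff_nontrivial.1 (by rw [card_projLine5]; norm_num)
  obtain ⟨q, hq⟩ := exists_ne p
  obtain ⟨g, hg⟩ := exists_smul_eq (Matrix.SpecialLinearGroup (Fin 2) (ZMod 5)) p q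
  -- On the projective line the `SL`-action is the restriction of `glPermHom`, definitionally.
  have hmem : glPermHom g.toGL ∈ stabilizer (Perm ProjLine5) p := h ▸ ⟨_, rfl⟩
  exact hq (hg.symm.trans hmem)

theorem pglSubgroup_eq_comap {n : ℕ} (f : Fin n ≃ ProjLine5) :
    pglSubgroup f = glPermHom.range.comap (f.permCongrHom : Perm (Fin n) →* Perm ProjLine5) :=
  (Subgroup.comap_equiv_eq_map_symm' f.permCongrHom _).symm

theorem subgroup_of_index_n_in_symmetric_general {α : Type*} (hα : 5 ≤ Nat.card α)
    (G : Subgroup (Perm α)) (hG : G.index = Nat.card α) :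
    (∃ x : α, G = stabilizer (Perm α) x) ∨ (Nat.card α = 6 ∧ ∃ f : α ≃ ProjLine5,
      G = glPermHom.range.comap (f.permCongrHom : Perm α →* Perm ProjLine5)) := by
  have : Finite α := Nat.finite_of_card_ne_zero (by lia)
  refine or_iff_not_imp_left.2 fun hG' ↦ ?_
  rw [not_exists] at hG'
  have hcard := card_eq_six_of_forall_ne_stabilizer hα hG hG'
  exact ⟨hcard, exists_eq_comap_permCongrHom hα (hcard.trans card_projLine5.symm) hG
    (index_range_glPermHom.trans card_projLine5.symm) hG' range_glPermHom_ne_stabilizer⟩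

end ProjectiveLine

/-- For `n ≥ 5`, a subgroup of `Sₙ` of index `n` is, up to conjugacy, the stabilizer of a
point, or `n = 6` and it acts on the six points as `PGL₂(5)` acts on the projective line
over `GF(5)`. -/
theorem subgroup_of_index_n_in_symmetric (n : ℕ) (hn : 5 ≤ n)
    (G : Subgroup (Equiv.Perm (Fin n))) (hG : G.index = n) :
    (∃ x : Fin n, G = MulAction.stabilizer (Equiv.Perm (Fin n)) x) ∨
      (n = 6 ∧ ∃ f : Fin n ≃ ProjLine5, G = pglSubgroup f) := by
  have hcard : Nat.card (Fin n) = n := Nat.card_fin n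
  simpa only [hcard, pglSubgroup_eq_comap] using
    subgroup_of_index_n_in_symmetric_general (by rwa [hcard]) G (hG.trans hcard.symm)
end

section
/- Let n ≥ 3 be odd. There is no rank-n integer lattice Λ in ℝⁿ invariant under the group C₂ⁿ⁺ ⋊ Sₙ (even sign changes together with all coordinate permutations) other than integer multiples of ℤⁿ, Dₙ, and the lattice of integer vectors with all coordinates of equal parity, all of which are invariant under the full hyperoctahedral group. -/
open Equiv

/-- The signed permutation of `ℤⁿ` determined by a sign vector `v` and a permutation `σ`:
`x ↦ (i ↦ v i * x (σ⁻¹ i))`. -/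
def signedPerm {n : ℕ} (v : Fin n → ℤˣ) (σ : Perm (Fin n)) (x : Fin n → ℤ) : Fin n → ℤ :=
  fun i => (v i : ℤ) * x (σ.symm i)

/-- `Λ` is a rank-`n` lattice in `ℤⁿ`: it is spanned by `n` linearly independent
vectors. -/
def IsFullLattice {n : ℕ} (Λ : Submodule ℤ (Fin n → ℤ)) : Prop :=
  ∃ b : Fin n → (Fin n → ℤ), LinearIndependent ℤ b ∧ Λ = Submodule.span ℤ (Set.range b)

/-- The scaling of a lattice by an integer `s`. -/
def scl {n : ℕ} (s : ℤ) (p : Submodule ℤ (Fin n → ℤ)) : Submodule ℤ (Fin n → ℤ) :=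
  p.map (s • (LinearMap.id : (Fin n → ℤ) →ₗ[ℤ] (Fin n → ℤ)))

/-- The lattice `Dₙ` of integer vectors with even coordinate sum. -/
def Dlat (n : ℕ) : Submodule ℤ (Fin n → ℤ) where
  carrier := {x | (2 : ℤ) ∣ ∑ i, x i}
  add_mem' := by
    intro a b ha hb
    simpa [Finset.sum_add_distrib] using dvd_add ha hb
  zero_mem' := by simp
  smul_mem' := by
    intro c x hx
    simpa [Finset.mul_sum] using hx.mul_left c

/-- The lattice of integer vectors all of whose coordinates have the same parity. -/
def sameParity (n : ℕ) : Submodule ℤ (Fin n → ℤ) where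
  carrier := {x | ∀ i j, (2 : ℤ) ∣ (x i - x j)}
  add_mem' := by
    intro a b ha hb i j
    have := dvd_add (ha i j) (hb i j)
    simpa [Pi.add_apply, add_sub_add_comm] using this
  zero_mem' := by simp
  smul_mem' := by
    intro c x hx i j
    have := (hx i j).mul_left c
    simpa [Pi.smul_apply, smul_eq_mul, mul_sub] using this

/-- The basis of the lattice `Λ₀`: `v₁ = (1,…,1)` and, for `2 ≤ k ≤ n`, `v_k` having `-1`
in positions `1` and `k` and `1` elsewhere (`0`-indexed: positions `0` and `k`). -/
def L0basis (n : ℕ) : Fin n → (Fin n → ℤ) :=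
  fun k i => if k.val = 0 then 1 else if i.val = 0 ∨ i = k then -1 else 1

/-- The lattice `Λ₀`. -/
def L0 (n : ℕ) : Submodule ℤ (Fin n → ℤ) := Submodule.span ℤ (Set.range (L0basis n))

/-- The basis of the lattice `Λ₁`: `w_k` has `-1` in position `k` and `1` elsewhere. -/
def L1basis (n : ℕ) : Fin n → (Fin n → ℤ) :=
  fun k i => if i = k then -1 else 1

/-- The lattice `Λ₁`. -/
def L1 (n : ℕ) : Submodule ℤ (Fin n → ℤ) := Submodule.span ℤ (Set.range (L1basis n))

/-!
Let `Λ` be invariant under `Bₙ` and let `g` be the gcd of all coordinates of all its vectors.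
Subtracting from a vector its image under the sign change at `i` leaves `2c eᵢ`, where `c` is its
`i`-th coordinate, so `2gℤⁿ ≤ Λ ≤ gℤⁿ`. Hence `Λ` is `g` times a lattice determined by its reduction
modulo `2`, an `Sₙ`-invariant subspace of `𝔽₂ⁿ`. Over any field the only such subspaces are `0`, the
constant vectors, the vectors of coordinate sum zero, and the whole space. For odd `n`, the odd sign
change `-1` preserves every lattice, so even sign changes and permutations already give all of `Bₙ`.
-/

section Permutations

variable {ι R K : Type*}

/-- Stability of a submodule of `ι → R` under permutation of the coordinates. Precomposition with
`σ` is the action of `σ⁻¹`, which makes no difference when `σ` ranges over the whole group. -/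
def PermInvariant [Semiring R] (W : Submodule R (ι → R)) : Prop :=
  ∀ σ : Perm ι, ∀ x ∈ W, x ∘ σ ∈ W

/-- The coordinate sum as a linear functional; its kernel is the hyperplane of vectors of
coordinate sum zero. -/
def coordSum (R ι : Type*) [Semiring R] [Fintype ι] : (ι → R) →ₗ[R] R :=
  ∑ i, LinearMap.proj i

@[simp]
theorem coordSum_apply [Semiring R] [Fintype ι] (x : ι → R) : coordSum R ι x = ∑ i, x i := by
  simp [coordSum]

theorem mem_span_singleton_one_iff [Semiring R] {x : ι → R} :
    x ∈ Submodule.span R {(1 : ι → R)} ↔ ∀ i j, x i = x j := by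
  rw [Submodule.mem_span_singleton]
  constructor
  · rintro ⟨c, rfl⟩ _ _
    rfl
  · intro hx
    rcases isEmpty_or_nonempty ι with _ | ⟨⟨o⟩⟩
    · exact ⟨0, Subsingleton.elim _ _⟩
    · exact ⟨x o, funext fun i => by simp [hx i o]⟩

theorem ker_coordSum_le_of_single_sub_single_mem [Ring R] [Fintype ι] [DecidableEq ι]
    {W : Submodule R (ι → R)} (hW : ∀ i j, (Pi.single i 1 - Pi.single j 1 : ι → R) ∈ W) :
    LinearMap.ker (coordSum R ι) ≤ W := by
  intro x hx
  rw [LinearMap.mem_ker, coordSum_apply] at hx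
  rcases isEmpty_or_nonempty ι with _ | ⟨⟨o⟩⟩
  · exact Subsingleton.elim 0 x ▸ W.zero_mem
  have hdecomp : x = ∑ i, x i • (Pi.single i 1 - Pi.single o 1 : ι → R) := by
    simp only [smul_sub, Finset.sum_sub_distrib, ← Finset.sum_smul, hx, zero_smul, sub_zero]
    exact pi_eq_sum_univ' x
  rw [hdecomp]
  exact W.sum_mem fun i _ => W.smul_mem _ (hW i o)

theorem isCoatom_ker_coordSum [DivisionRing K] [Fintype ι] [Nonempty ι] :
    IsCoatom (LinearMap.ker (coordSum K ι)) := by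
  classical
  refine LinearMap.isCoatom_ker_of_surjective fun c => ?_
  exact ⟨Pi.single (Classical.arbitrary ι) c, by simp⟩

theorem sub_comp_swap [Ring R] [DecidableEq ι] (x : ι → R) (i j : ι) :
    x - x ∘ swap i j = (x i - x j) • (Pi.single i 1 - Pi.single j 1 : ι → R) := by
  funext k
  rcases eq_or_ne i j with rfl | hij
  · simp
  rcases eq_or_ne k i with rfl | hki
  · simp [hij]
  rcases eq_or_ne k j with rfl | hkj
  · simp [hij.symm]
  · simp [hki, hkj, swap_apply_of_ne_of_ne hki hkj]

namespace PermInvariant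

theorem single_sub_single_mem [DivisionRing K] [DecidableEq ι] {W : Submodule K (ι → K)}
    (hW : PermInvariant W) {x : ι → K} (hx : x ∈ W) {i j : ι} (hij : x i ≠ x j) (a b : ι) :
    (Pi.single a 1 - Pi.single b 1 : ι → K) ∈ W := by
  have hmem : (Pi.single i 1 - Pi.single j 1 : ι → K) ∈ W := by
    rw [← W.smul_mem_iff (sub_ne_zero.2 hij), ← sub_comp_swap]
    exact W.sub_mem hx (hW _ x hx)
  rcases eq_or_ne a b with rfl | hab
  · simp
  have := Equiv.Perm.isMultiplyPretransitive ι 2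
  obtain ⟨σ, hσi, hσj⟩ := MulAction.is_two_pretransitive_iff.1 this
    (ne_of_apply_ne x hij) hab
  rw [Perm.smul_def] at hσi hσj
  convert hW σ.symm _ hmem using 1
  funext k
  simp [Pi.single_apply, Equiv.symm_apply_eq, hσi, hσj]

theorem eq_bot_or_eq_span_one_or_eq_ker_coordSum_or_eq_top [DivisionRing K] [Fintype ι]
    {W : Submodule K (ι → K)} (hW : PermInvariant W) :
    W = ⊥ ∨ W = Submodule.span K {1} ∨ W = LinearMap.ker (coordSum K ι) ∨ W = ⊤ := by
  classical
  rcases isEmpty_or_nonempty ι with _ | _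
  · exact Or.inl (Subsingleton.elim _ _)
  by_cases hconst : W ≤ Submodule.span K {1}
  · rcases (nonzero_span_atom (1 : ι → K) one_ne_zero).le_iff.1 hconst with h | h <;> simp [h]
  · obtain ⟨x, hxW, hx⟩ := SetLike.not_le_iff_exists.1 hconst
    rw [mem_span_singleton_one_iff] at hx
    push Not at hx
    obtain ⟨i, j, hij⟩ := hx
    have hker := ker_coordSum_le_of_single_sub_single_mem (hW.single_sub_single_mem hxW hij)
    rcases isCoatom_ker_coordSum.le_iff.1 hker with h | h <;> simp [h]

end PermInvariant

end Permutations

section Scaling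

variable {n : ℕ}

theorem mem_scl_top {s : ℤ} {x : Fin n → ℤ} : x ∈ scl s ⊤ ↔ ∀ i, s ∣ x i := by
  constructor
  · rintro ⟨y, -, rfl⟩ i
    exact ⟨y i, rfl⟩
  · intro hx
    choose y hy using hx
    exact ⟨y, trivial, funext fun i => (hy i).symm⟩

theorem scl_scl (s t : ℤ) (p : Submodule ℤ (Fin n → ℤ)) : scl s (scl t p) = scl (s * t) p := by
  simp only [scl, ← Submodule.map_comp]
  congr 1
  ext
  simp

end Scaling

section Reduction

variable {n : ℕ}

instance (m : ℕ) : RingHomSurjective (Int.castRingHom (ZMod m)) := ⟨ZMod.ringHom_surjective _⟩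

/-- Coordinatewise reduction `ℤⁿ → (ℤ/m)ⁿ`. It is semilinear over `ℤ → ℤ/m`, so that images of
lattices are `ℤ/m`-submodules. -/
def reduceMod (m n : ℕ) : (Fin n → ℤ) →ₛₗ[Int.castRingHom (ZMod m)] (Fin n → ZMod m) where
  toFun x i := x i
  map_add' x y := by ext; simp
  map_smul' c x := by ext; simp

@[simp]
theorem reduceMod_apply (m : ℕ) (x : Fin n → ℤ) (i : Fin n) : reduceMod m n x i = x i := rfl

theorem ker_reduceMod (m : ℕ) : LinearMap.ker (reduceMod m n) = scl m ⊤ := by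
  ext x
  simp [mem_scl_top, funext_iff, ZMod.intCast_zmod_eq_zero_iff_dvd]

theorem comap_reduceMod_two_span_one :
    (Submodule.span (ZMod 2) {1}).comap (reduceMod 2 n) = sameParity n := by
  ext x
  rw [Submodule.mem_comap, mem_span_singleton_one_iff]
  refine forall₂_congr fun i j => ?_
  rw [reduceMod_apply, reduceMod_apply, eq_comm, ZMod.intCast_eq_intCast_iff_dvd_sub]
  rfl

theorem comap_reduceMod_two_ker_coordSum :
    (LinearMap.ker (coordSum (ZMod 2) (Fin n))).comap (reduceMod 2 n) = Dlat n := by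
  ext x
  simp only [Submodule.mem_comap, LinearMap.mem_ker, coordSum_apply, reduceMod_apply,
    ← Int.cast_sum]
  exact ZMod.intCast_zmod_eq_zero_iff_dvd _ 2

namespace PermInvariant

variable {M : Submodule ℤ (Fin n → ℤ)}

theorem map_reduceMod (hM : PermInvariant M) (m : ℕ) : PermInvariant (M.map (reduceMod m n)) := by
  rintro σ _ ⟨x, hx, rfl⟩
  exact ⟨x ∘ σ, hM σ x hx, rfl⟩

theorem eq_of_scl_prime_top_le (hM : PermInvariant M) (p : ℕ) [Fact p.Prime] (hp : scl p ⊤ ≤ M) :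
    M = scl p ⊤ ∨ M = (Submodule.span (ZMod p) {1}).comap (reduceMod p n) ∨
      M = (LinearMap.ker (coordSum (ZMod p) (Fin n))).comap (reduceMod p n) ∨ M = ⊤ := by
  have hcomap : (M.map (reduceMod p n)).comap (reduceMod p n) = M :=
    Submodule.comap_map_eq_self ((ker_reduceMod p).trans_le hp)
  rcases (hM.map_reduceMod p).eq_bot_or_eq_span_one_or_eq_ker_coordSum_or_eq_top
    with h | h | h | h <;> rw [h] at hcomap
  · exact Or.inl (hcomap.symm.trans (ker_reduceMod p))
  · exact Or.inr (Or.inl hcomap.symm)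
  · exact Or.inr (Or.inr (Or.inl hcomap.symm))
  · exact Or.inr (Or.inr (Or.inr (hcomap.symm.trans (Submodule.comap_top _))))

theorem eq_of_scl_two_top_le (hM : PermInvariant M) (htwo : scl 2 ⊤ ≤ M) :
    M = scl 2 ⊤ ∨ M = sameParity n ∨ M = Dlat n ∨ M = ⊤ := by
  rw [← comap_reduceMod_two_span_one, ← comap_reduceMod_two_ker_coordSum]
  exact hM.eq_of_scl_prime_top_le 2 htwo

end PermInvariant

end Reduction

/-- Stability of a lattice under the full hyperoctahedral group `Bₙ`. -/
def HyperoctahedralInvariant {n : ℕ} (Λ : Submodule ℤ (Fin n → ℤ)) : Prop :=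
  ∀ (v : Fin n → ℤˣ) (σ : Perm (Fin n)), ∀ x ∈ Λ, signedPerm v σ x ∈ Λ

/-- The ideal generated by all coordinates of all vectors of `Λ`. Over `ℤ`, it encodes
their gcd, the factor that can be divided out of the whole lattice. -/
def coordIdeal {ι R : Type*} [Semiring R] (Λ : Submodule R (ι → R)) : Ideal R :=
  ⨆ i, Λ.map (LinearMap.proj i)

theorem apply_mem_coordIdeal {ι R : Type*} [Semiring R] {Λ : Submodule R (ι → R)} {x : ι → R}
    (hx : x ∈ Λ) (i : ι) : x i ∈ coordIdeal Λ :=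
  Submodule.mem_iSup_of_mem i ⟨x, hx, rfl⟩

namespace HyperoctahedralInvariant

variable {n : ℕ} {Λ : Submodule ℤ (Fin n → ℤ)}

theorem of_odd_of_even (hodd : Odd n)
    (heven : ∀ (v : Fin n → ℤˣ) (σ : Perm (Fin n)), (∏ i, v i) = 1 →
      ∀ x ∈ Λ, signedPerm v σ x ∈ Λ) :
    HyperoctahedralInvariant Λ := by
  intro v σ x hx
  rcases Int.units_eq_one_or (∏ i, v i) with hv | hv
  · exact heven v σ hv x hx
  · have hneg : ∏ i, (-v) i = 1 := by simp [Finset.prod_neg, hv, hodd.neg_one_pow]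
    have hsigned : signedPerm v σ x = -signedPerm (-v) σ x := by
      funext i
      simp [signedPerm]
    rw [hsigned]
    exact Λ.neg_mem (heven (-v) σ hneg x hx)

theorem permInvariant (hΛ : HyperoctahedralInvariant Λ) : PermInvariant Λ := by
  intro σ x hx
  have hsigned : signedPerm 1 σ.symm x = x ∘ σ := by
    funext i
    simp [signedPerm]
  exact hsigned ▸ hΛ 1 σ.symm x hx

theorem single_two_mul_apply_mem (hΛ : HyperoctahedralInvariant Λ) {x : Fin n → ℤ} (hx : x ∈ Λ)
    (i j : Fin n) : Pi.single j (2 * x i) ∈ Λ := by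
  have hy := hΛ.permInvariant (swap i j) x hx
  have hflip := hΛ (Function.update 1 j (-1)) (Equiv.refl _) _ hy
  convert Λ.sub_mem hy hflip using 1
  funext k
  rcases eq_or_ne k j with rfl | hkj
  · simp [signedPerm, two_mul]
  · simp [signedPerm, hkj]

theorem single_two_mul_mem (hΛ : HyperoctahedralInvariant Λ) {c : ℤ} (hc : c ∈ coordIdeal Λ)
    (j : Fin n) : Pi.single j (2 * c) ∈ Λ := by
  have hle : coordIdeal Λ ≤
      Λ.comap (LinearMap.single ℤ (fun _ => ℤ) j ∘ₗ LinearMap.mulLeft ℤ 2) := by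
    refine iSup_le fun i => ?_
    rintro _ ⟨x, hx, rfl⟩
    exact hΛ.single_two_mul_apply_mem hx i j
  exact hle hc

theorem exists_scl_mul_two_top_le_and_le_scl_top (hΛ : HyperoctahedralInvariant Λ) :
    ∃ g : ℤ, scl (g * 2) ⊤ ≤ Λ ∧ Λ ≤ scl g ⊤ := by
  have hmem : ∀ c, c ∈ coordIdeal Λ ↔ Submodule.IsPrincipal.generator (coordIdeal Λ) ∣ c :=
    fun c => Submodule.IsPrincipal.mem_iff_generator_dvd _
  refine ⟨Submodule.IsPrincipal.generator (coordIdeal Λ), fun x hx => ?_, fun x hx => ?_⟩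
  · rw [← Finset.univ_sum_single x]
    refine Λ.sum_mem fun i _ => ?_
    obtain ⟨c, hc⟩ := mem_scl_top.1 hx i
    rw [hc, mul_right_comm, mul_comm]
    exact hΛ.single_two_mul_mem ((hmem _).2 (dvd_mul_right _ c)) i
  · exact mem_scl_top.2 fun i => (hmem _).1 (apply_mem_coordIdeal hx i)

theorem exists_eq_scl (hΛ : HyperoctahedralInvariant Λ) :
    ∃ s : ℤ, Λ = scl s ⊤ ∨ Λ = scl s (Dlat n) ∨ Λ = scl s (sameParity n) := by
  obtain ⟨g, hlower, hupper⟩ := hΛ.exists_scl_mul_two_top_le_and_le_scl_top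
  set M := Λ.comap (g • (LinearMap.id : (Fin n → ℤ) →ₗ[ℤ] (Fin n → ℤ)))
  have hscl : Λ = scl g M :=
    (Submodule.map_comap_eq_self (hupper.trans LinearMap.map_le_range)).symm
  have hperm : PermInvariant M := fun σ x hx => hΛ.permInvariant σ _ hx
  have htwo : scl 2 ⊤ ≤ M :=
    Submodule.map_le_iff_le_comap.1 ((scl_scl g 2 ⊤).trans_le hlower)
  rcases hperm.eq_of_scl_two_top_le htwo with h | h | h | h <;> rw [h] at hscl
  · exact ⟨g * 2, Or.inl (hscl.trans (scl_scl g 2 ⊤))⟩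
  · exact ⟨g, Or.inr (Or.inr hscl)⟩
  · exact ⟨g, Or.inr (Or.inl hscl)⟩
  · exact ⟨g, Or.inl hscl⟩

end HyperoctahedralInvariant

/-- For odd `n ≥ 3`, the only full-rank integer lattices invariant under `C₂ⁿ⁺ ⋊ Sₙ`
(even sign changes together with all coordinate permutations) are the integer multiples
of `ℤⁿ`, `Dₙ` and the same-parity lattice, and these are invariant under the full
hyperoctahedral group. -/
theorem lattices_invariant_odd_case (n : ℕ) (hn : 3 ≤ n) (hodd : Odd n)
    (Λ : Submodule ℤ (Fin n → ℤ)) (hfull : IsFullLattice Λ)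
    (hinv : ∀ (v : Fin n → ℤˣ) (σ : Perm (Fin n)), (∏ i, v i) = 1 →
      ∀ x ∈ Λ, signedPerm v σ x ∈ Λ) :
    (∃ s : ℤ, Λ = scl s ⊤ ∨ Λ = scl s (Dlat n) ∨ Λ = scl s (sameParity n)) ∧
      (∀ (v : Fin n → ℤˣ) (σ : Perm (Fin n)), ∀ x ∈ Λ, signedPerm v σ x ∈ Λ) := by
  have hΛ : HyperoctahedralInvariant Λ := .of_odd_of_even hodd hinv
  exact ⟨hΛ.exists_eq_scl, hΛ⟩
end

section
/- If Λ ⊆ ℤ⁶ is a rank-6 lattice invariant under C₂⁶ ⋊ PGL₂(5), where PGL₂(5) ≤ S₆ acts on the 6 coordinates as on the projective line over GF(5), then Λ = s·ℤ⁶, s·D₆, or s·{x ∈ ℤ⁶ : all xᵢ of equal parity} for some positive integer s. -/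
open Equiv Projectivization

/-!
After dividing `Λ` by the gcd `s` of its coordinates, sign changes put `2ℤⁿ` inside the resulting
lattice `M`, so that membership in `M` depends only on the set of odd coordinates. A group that is
transitive on `k`-subsets for every `k` leaves only the size of that set relevant. Hence, if some
vector of `M` has both odd and even coordinates, exchanging an odd and an even position shows that
`M` contains every `eᵢ + eⱼ`, and therefore `Dₙ`, which has index two in `ℤⁿ`. The group `PGL₂(5)`
qualifies: it is 3-transitive on 6 points, and complementation handles the subsets of size above 3.
-/

open MulAction Module
open scoped Pointwise

/-- The action of `G` on `α` is set-transitive: for every `k`, it is transitive on the `k`-element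
subsets of `α`. This is what the classification of invariant lattices needs from the permutation
group. -/
def IsSetTransitive (G α : Type*) [Group G] [MulAction G α] [DecidableEq α] : Prop :=
  ∀ k, IsPretransitive G (Set.powersetCard α k)

namespace IsSetTransitive

variable {G α : Type*} [Group G] [MulAction G α] [DecidableEq α]

lemma exists_smul_eq (hG : IsSetTransitive G α) {S T : Finset α} (h : S.card = T.card) :
    ∃ g : G, g • S = T := by
  have := hG T.card
  obtain ⟨g, hg⟩ := MulAction.exists_smul_eq G (⟨S, h⟩ : Set.powersetCard α T.card) ⟨T, rfl⟩
  exact ⟨g, congrArg Subtype.val hg⟩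

lemma isPretransitive (hG : IsSetTransitive G α) : IsPretransitive G α where
  exists_smul_eq i j := by
    obtain ⟨g, hg⟩ := hG.exists_smul_eq (S := {i}) (T := {j}) rfl
    exact ⟨g, by simpa using hg⟩

theorem of_isMultiplyPretransitive [Fintype α] {m : ℕ} [IsMultiplyPretransitive G α m]
    (hm : m ≤ Fintype.card α) (hα : Fintype.card α ≤ 2 * m + 1) : IsSetTransitive G α := by
  have of_le {k : ℕ} (hk : k ≤ m) : IsPretransitive G (Set.powersetCard α k) :=
    Set.powersetCard.isPretransitive_of_isMultiplyPretransitive G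
      (isMultiplyPretransitive_of_le hk (by simpa using hm))
  intro k
  by_cases hk : k ≤ m
  · exact of_le hk
  by_cases hkα : k ≤ Fintype.card α
  · have := of_le (k := Fintype.card α - k) (by omega)
    exact IsPretransitive.of_surjective_map (Set.powersetCard.mulActionHom_compl_bijective G α
      (Nat.add_sub_cancel' hkα)).surjective this
  · have no_subset (S : Set.powersetCard α k) : False :=
      hkα (S.2.symm.trans_le (Finset.card_le_univ _))
    exact ⟨fun S ↦ (no_subset S).elim⟩

end IsSetTransitive

section ProjectiveLine

variable {K V : Type*} [DivisionRing K] [AddCommGroup V] [Module K V]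

lemma mk_eq_of_eq_smul_rep {D : Projectivization K V} {v : V} (hv : v ≠ 0) {a : K}
    (h : v = a • D.rep) : .mk K v hv = D := by
  rw [← D.mk_rep, mk_eq_mk_iff']
  exact ⟨a, h.symm⟩

lemma exists_basis_mk_eq_of_ne (hV : finrank K V = 2) {D₀ D₁ D₂ : Projectivization K V}
    (h₀₁ : D₀ ≠ D₁) (h₀₂ : D₀ ≠ D₂) (h₁₂ : D₁ ≠ D₂) :
    ∃ (b : Basis (Fin 2) K V) (hb : b 0 + b 1 ≠ 0),
      .mk K (b 0) (b.ne_zero 0) = D₀ ∧ .mk K (b 1) (b.ne_zero 1) = D₁ ∧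
        .mk K (b 0 + b 1) hb = D₂ := by
  let c : Basis (Fin 2) K V := basisOfLinearIndependentOfCardEqFinrank
    (linearIndependent_pair_iff_ne.2 h₀₁) (by simp [hV])
  obtain ⟨r₀, r₁, hD₂⟩ : ∃ r₀ r₁, D₂.rep = r₀ • D₀.rep + r₁ • D₁.rep :=
    ⟨c.repr D₂.rep 0, c.repr D₂.rep 1, by simpa [c] using (c.sum_repr D₂.rep).symm⟩
  have hr₀ : r₀ ≠ 0 := fun h ↦ h₁₂ <|
    (mk_eq_of_eq_smul_rep (a := r₁) D₂.rep_nonzero (by rw [hD₂, h, zero_smul, zero_add])).symm.trans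
      D₂.mk_rep
  have hr₁ : r₁ ≠ 0 := fun h ↦ h₀₂ <|
    (mk_eq_of_eq_smul_rep (a := r₀) D₂.rep_nonzero (by rw [hD₂, h, zero_smul, add_zero])).symm.trans
      D₂.mk_rep
  let b := c.unitsSMul ![Units.mk0 r₀ hr₀, Units.mk0 r₁ hr₁]
  have hb₀ : b 0 = r₀ • D₀.rep := by simp [b, c, Basis.unitsSMul_apply, Units.smul_def]
  have hb₁ : b 1 = r₁ • D₁.rep := by simp [b, c, Basis.unitsSMul_apply, Units.smul_def]
  have hb : b 0 + b 1 = D₂.rep := by rw [hb₀, hb₁, hD₂]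
  exact ⟨b, hb ▸ D₂.rep_nonzero, mk_eq_of_eq_smul_rep _ hb₀, mk_eq_of_eq_smul_rep _ hb₁,
    mk_eq_of_eq_smul_rep _ (hb.trans (one_smul K _).symm)⟩

theorem linearEquiv_isMultiplyPretransitive_three (hV : finrank K V = 2) :
    IsMultiplyPretransitive (V ≃ₗ[K] V) (Projectivization K V) 3 := by
  rw [isMultiplyPretransitive_iff]
  intro D E
  obtain ⟨b, hb, hD₀, hD₁, hD₂⟩ := exists_basis_mk_eq_of_ne hV
    (D.injective.ne (by decide : (0 : Fin 3) ≠ 1)) (D.injective.ne (by decide : (0 : Fin 3) ≠ 2))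
    (D.injective.ne (by decide : (1 : Fin 3) ≠ 2))
  obtain ⟨c, hc, hE₀, hE₁, hE₂⟩ := exists_basis_mk_eq_of_ne hV
    (E.injective.ne (by decide : (0 : Fin 3) ≠ 1)) (E.injective.ne (by decide : (0 : Fin 3) ≠ 2))
    (E.injective.ne (by decide : (1 : Fin 3) ≠ 2))
  refine ⟨b.equiv c (Equiv.refl _), ?_⟩
  ext i
  fin_cases i <;> simp [← hD₀, ← hD₁, ← hD₂, ← hE₀, ← hE₁, ← hE₂]

lemma glLin_surjective : Function.Surjective glLin :=
  (LinearMap.GeneralLinearGroup.generalLinearEquiv (ZMod 5) (Fin 2 → ZMod 5)).surjective.comp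
    Matrix.GeneralLinearGroup.toLin.surjective

lemma glPermHom_apply (g : GL (Fin 2) (ZMod 5)) (x : ProjLine5) : glPermHom g x = glLin g • x :=
  rfl

theorem pglSubgroup_isMultiplyPretransitive_three {n : ℕ} (f : Fin n ≃ ProjLine5) :
    IsMultiplyPretransitive (pglSubgroup f) (Fin n) 3 := by
  have := linearEquiv_isMultiplyPretransitive_three (K := ZMod 5) (V := Fin 2 → ZMod 5) (by simp)
  choose matrixOf glLin_matrixOf using glLin_surjective
  let perm (φ : (Fin 2 → ZMod 5) ≃ₗ[ZMod 5] (Fin 2 → ZMod 5)) : pglSubgroup f :=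
    ⟨_root_.permCongrHom f.symm (glPermHom (matrixOf φ)), _, ⟨_, rfl⟩, rfl⟩
  let toFin : ProjLine5 →ₑ[perm] Fin n :=
    { toFun := f.symm
      map_smul' := fun φ x ↦ by
        change f.symm (φ • x) = f.symm (glPermHom (matrixOf φ) (f (f.symm x)))
        rw [f.apply_symm_apply, glPermHom_apply, glLin_matrixOf] }
  exact IsPretransitive.of_embedding (f := toFin) f.symm.surjective

theorem pglSubgroup_isSetTransitive (f : Fin 6 ≃ ProjLine5) :
    IsSetTransitive (pglSubgroup f) (Fin 6) :=
  have := pglSubgroup_isMultiplyPretransitive_three f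
  .of_isMultiplyPretransitive (m := 3) (by simp) (by simp)

end ProjectiveLine

section InvariantLattices

variable {n : ℕ} {G : Subgroup (Perm (Fin n))} {Λ M : Submodule ℤ (Fin n → ℤ)}

lemma IsFullLattice.ne_bot [NeZero n] (hΛ : IsFullLattice Λ) : Λ ≠ ⊥ := by
  obtain ⟨b, hb, rfl⟩ := hΛ
  exact (Submodule.ne_bot_iff _).2 ⟨b 0, Submodule.subset_span ⟨0, rfl⟩, hb.ne_zero 0⟩

section ModTwo

/-- The set of positions at which `x` is odd, i.e. the support of `x` modulo 2. For a lattice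
containing `2ℤⁿ` it decides membership. -/
def oddSupport (x : Fin n → ℤ) : Finset (Fin n) := {i | Odd (x i)}

lemma mem_oddSupport {x : Fin n → ℤ} {i : Fin n} : i ∈ oddSupport x ↔ Odd (x i) := by
  simp [oddSupport]

lemma oddSupport_comp (x : Fin n → ℤ) (σ : Perm (Fin n)) :
    oddSupport (x ∘ σ) = σ⁻¹ • oddSupport x := by
  ext i
  rw [Finset.mem_inv_smul_finset_iff, mem_oddSupport, mem_oddSupport, Perm.smul_def,
    Function.comp_apply]

lemma oddSupport_single_add_single {i j : Fin n} (h : i ≠ j) :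
    oddSupport (Pi.single i 1 + Pi.single j 1) = {i, j} := by
  ext k
  simp only [mem_oddSupport, Pi.add_apply, Pi.single_apply, Finset.mem_insert,
    Finset.mem_singleton]
  grind

lemma card_oddSupport_add_single_add_single {x : Fin n → ℤ} {i j : Fin n} (hi : Odd (x i))
    (hj : Even (x j)) :
    (oddSupport (x + (Pi.single i 1 + Pi.single j 1))).card = (oddSupport x).card := by
  have exchange : oddSupport (x + (Pi.single i 1 + Pi.single j 1)) =
      insert j ((oddSupport x).erase i) := by
    ext k
    simp only [mem_oddSupport, Pi.add_apply, Pi.single_apply, Finset.mem_insert, Finset.mem_erase]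
    grind
  have hj' : j ∉ (oddSupport x).erase i := by
    simpa [mem_oddSupport] using fun _ ↦ hj
  rw [exchange, Finset.card_insert_of_notMem hj', Finset.card_erase_add_one (mem_oddSupport.2 hi)]

lemma mem_of_oddSupport_eq (h2 : ∀ x, (2 : ℤ) • x ∈ M) {x y : Fin n → ℤ} (hx : x ∈ M)
    (h : oddSupport y = oddSupport x) : y ∈ M := by
  have even_sub (i : Fin n) : (2 : ℤ) ∣ y i - x i := by
    have := Finset.ext_iff.1 h i
    rw [mem_oddSupport, mem_oddSupport] at this
    grind
  choose z hz using even_sub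
  have hy : y = (2 : ℤ) • z + x := by
    ext i
    simp [← hz]
  exact hy ▸ M.add_mem (h2 z) hx

lemma mem_of_card_oddSupport_eq (hG : IsSetTransitive G (Fin n))
    (hperm : ∀ σ ∈ G, ∀ x ∈ M, x ∘ σ ∈ M) (h2 : ∀ x, (2 : ℤ) • x ∈ M) {x y : Fin n → ℤ}
    (hx : x ∈ M) (h : (oddSupport y).card = (oddSupport x).card) : y ∈ M := by
  obtain ⟨σ, hσ⟩ := hG.exists_smul_eq h
  refine mem_of_oddSupport_eq h2 (hperm σ σ.2 x hx) ?_
  rw [oddSupport_comp, ← hσ, eq_inv_smul_iff]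
  rfl

lemma single_add_single_mem (hG : IsSetTransitive G (Fin n))
    (hperm : ∀ σ ∈ G, ∀ x ∈ M, x ∘ σ ∈ M) (h2 : ∀ x, (2 : ℤ) • x ∈ M) {x : Fin n → ℤ}
    (hx : x ∈ M) {a b : Fin n} (ha : Odd (x a)) (hb : Even (x b)) {i j : Fin n} (hij : i ≠ j) :
    Pi.single i 1 + Pi.single j 1 ∈ M := by
  have hab : a ≠ b := by
    rintro rfl
    exact Int.not_even_iff_odd.2 ha hb
  have exchanged_mem : x + (Pi.single a 1 + Pi.single b 1) ∈ M :=
    mem_of_card_oddSupport_eq hG hperm h2 hx (card_oddSupport_add_single_add_single ha hb)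
  have pair_mem : Pi.single a 1 + Pi.single b 1 ∈ M := (M.add_mem_iff_right hx).1 exchanged_mem
  refine mem_of_card_oddSupport_eq hG hperm h2 pair_mem ?_
  rw [oddSupport_single_add_single hij, oddSupport_single_add_single hab, Finset.card_pair hij,
    Finset.card_pair hab]

lemma dlat_le_of_single_add_single_mem (h2 : ∀ x, (2 : ℤ) • x ∈ M) (a : Fin n)
    (hpair : ∀ i ≠ a, Pi.single i 1 + Pi.single a 1 ∈ M) : Dlat n ≤ M := by
  rintro z ⟨c, hc⟩
  have pair_mem (i : Fin n) : Pi.single i 1 + Pi.single a 1 ∈ M := by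
    by_cases hi : i = a
    · rw [hi, ← two_smul ℤ]
      exact h2 _
    · exact hpair i hi
  have hz : z = ∑ i, z i • (Pi.single i 1 + Pi.single a 1 : Fin n → ℤ) -
      (2 : ℤ) • Pi.single a c := by
    simp_rw [smul_add, Finset.sum_add_distrib, ← Finset.sum_smul, hc, ← Pi.single_smul',
      smul_eq_mul, mul_one, Finset.univ_sum_single, add_sub_cancel_right]
  rw [hz]
  exact M.sub_mem (M.sum_mem fun i _ ↦ M.smul_mem _ (pair_mem i)) (h2 _)

lemma eq_top_or_eq_dlat_of_dlat_le (hM : Dlat n ≤ M) : M = ⊤ ∨ M = Dlat n := by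
  by_cases hle : M ≤ Dlat n
  · exact .inr (hle.antisymm hM)
  obtain ⟨w, hwM, hw⟩ := SetLike.not_le_iff_exists.1 hle
  refine .inl (eq_top_iff.2 fun z _ ↦ ?_)
  by_cases hz : z ∈ Dlat n
  · exact hM hz
  have hsub : z - w ∈ Dlat n := by
    change ¬ (2 : ℤ) ∣ ∑ i, w i at hw
    change ¬ (2 : ℤ) ∣ ∑ i, z i at hz
    change (2 : ℤ) ∣ ∑ i, (z i - w i)
    rw [Finset.sum_sub_distrib]
    omega
  simpa using M.add_mem (hM hsub) hwM

lemma oddSupport_eq_of_mem_sameParity {x y : Fin n → ℤ} (hx : x ∈ sameParity n)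
    (hy : y ∈ sameParity n) {i : Fin n} (hxi : Odd (x i)) (hyi : Odd (y i)) :
    oddSupport x = oddSupport y := by
  ext k
  have := hx k i
  have := hy k i
  rw [mem_oddSupport, mem_oddSupport]
  grind

lemma eq_sameParity_of_le (hM : M ≤ sameParity n) (h2 : ∀ x, (2 : ℤ) • x ∈ M)
    (hodd : ∀ i, ∃ y ∈ M, Odd (y i)) : M = sameParity n := by
  refine hM.antisymm fun z hz ↦ ?_
  obtain hz₀ | ⟨i, hi⟩ := (oddSupport z).eq_empty_or_nonempty
  · exact mem_of_oddSupport_eq h2 M.zero_mem (hz₀.trans (by simp [oddSupport]))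
  · obtain ⟨y, hyM, hyi⟩ := hodd i
    exact mem_of_oddSupport_eq h2 hyM
      (oddSupport_eq_of_mem_sameParity hz (hM hyM) (mem_oddSupport.1 hi) hyi)

theorem eq_top_or_eq_dlat_or_eq_sameParity (hG : IsSetTransitive G (Fin n))
    (hperm : ∀ σ ∈ G, ∀ x ∈ M, x ∘ σ ∈ M) (h2 : ∀ x, (2 : ℤ) • x ∈ M)
    (hodd : ∀ i, ∃ y ∈ M, Odd (y i)) : M = ⊤ ∨ M = Dlat n ∨ M = sameParity n := by
  by_cases hM : M ≤ sameParity n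
  · exact .inr (.inr (eq_sameParity_of_le hM h2 hodd))
  have mixed : ∃ x ∈ M, ∃ a b, Odd (x a) ∧ Even (x b) := by
    obtain ⟨x, hx, hxP⟩ := SetLike.not_le_iff_exists.1 hM
    obtain ⟨i, j, hij⟩ : ∃ i j, ¬ (2 : ℤ) ∣ x i - x j := by
      simpa only [not_forall] using (show ¬ ∀ i j, (2 : ℤ) ∣ x i - x j from hxP)
    obtain hi | hi := Int.even_or_odd (x i)
    · exact ⟨x, hx, j, i, by grind, hi⟩
    · exact ⟨x, hx, i, j, hi, by grind⟩
  obtain ⟨x, hx, a, b, ha, hb⟩ := mixed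
  have hD : Dlat n ≤ M := dlat_le_of_single_add_single_mem h2 a fun i hi ↦
    single_add_single_mem hG hperm h2 hx ha hb hi
  exact (eq_top_or_eq_dlat_of_dlat_le hD).imp_right .inl

end ModTwo

/-- The lattice `Λ` is invariant under `C₂ⁿ ⋊ G`, the group of signed permutations of the
coordinates whose underlying permutation lies in `G`. -/
def IsSignedPermInvariant (G : Subgroup (Perm (Fin n))) (Λ : Submodule ℤ (Fin n → ℤ)) : Prop :=
  ∀ (v : Fin n → ℤˣ) (σ : Perm (Fin n)), σ ∈ G → ∀ x ∈ Λ, signedPerm v σ x ∈ Λ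

namespace IsSignedPermInvariant

lemma comp_mem (hΛ : IsSignedPermInvariant G Λ) (σ : Perm (Fin n)) (hσ : σ ∈ G) (x : Fin n → ℤ)
    (hx : x ∈ Λ) : x ∘ σ ∈ Λ := by
  have hsigned : signedPerm 1 σ⁻¹ x = x ∘ σ := by
    ext i
    simp [signedPerm, Perm.inv_def]
  exact hsigned ▸ hΛ 1 σ⁻¹ (inv_mem hσ) x hx

lemma single_mem (hΛ : IsSignedPermInvariant G Λ) {x : Fin n → ℤ} (hx : x ∈ Λ) (i : Fin n) :
    Pi.single i (2 * x i) ∈ Λ := by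
  have hsub : x - signedPerm (Pi.mulSingle i (-1)) 1 x = Pi.single i (2 * x i) := by
    ext k
    obtain rfl | hk := eq_or_ne k i
    · simp [signedPerm, two_mul, Perm.one_def]
    · simp [signedPerm, hk, Perm.one_def]
  exact hsub ▸ Λ.sub_mem hx (hΛ _ 1 (one_mem G) x hx)

lemma two_smul_mem (hΛ : IsSignedPermInvariant G Λ) (hone : ∀ i, ∃ y ∈ Λ, y i = 1)
    (x : Fin n → ℤ) : (2 : ℤ) • x ∈ Λ := by
  have single_two_mem (i : Fin n) : Pi.single i 2 ∈ Λ := by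
    obtain ⟨y, hy, hyi⟩ := hone i
    simpa [hyi] using hΛ.single_mem hy i
  have hx : (2 : ℤ) • x = ∑ i, x i • (Pi.single i 2 : Fin n → ℤ) := by
    ext k
    simp [Pi.single_apply, mul_comm]
  exact hx ▸ Λ.sum_mem fun i _ ↦ Λ.smul_mem _ (single_two_mem i)

lemma comap_smul (hΛ : IsSignedPermInvariant G Λ) (s : ℤ) :
    IsSignedPermInvariant G (Λ.comap (s • LinearMap.id)) := by
  intro v σ hσ x hx
  have hsmul : s • signedPerm v σ x = signedPerm v σ (s • x) := by
    ext i
    simp [signedPerm, mul_left_comm]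
  change s • signedPerm v σ x ∈ Λ
  exact hsmul ▸ hΛ v σ hσ _ hx

end IsSignedPermInvariant

section Scaling

lemma scl_comap_smul_of_forall_dvd {s : ℤ} (h : ∀ x ∈ Λ, ∀ i, s ∣ x i) :
    scl s (Λ.comap (s • LinearMap.id)) = Λ := by
  rw [scl, Submodule.map_comap_eq, inf_eq_right]
  intro x hx
  choose y hy using h x hx
  exact ⟨y, by ext i; simp [hy]⟩

lemma map_proj_eq_map_proj [IsPretransitive G (Fin n)] (hperm : ∀ σ ∈ G, ∀ x ∈ Λ, x ∘ σ ∈ Λ)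
    (i j : Fin n) :
    Λ.map (LinearMap.proj (R := ℤ) (φ := fun _ ↦ ℤ) i) = Λ.map (LinearMap.proj j) := by
  have le (i j : Fin n) :
      Λ.map (LinearMap.proj (R := ℤ) (φ := fun _ ↦ ℤ) i) ≤ Λ.map (LinearMap.proj j) := by
    rintro _ ⟨x, hx, rfl⟩
    obtain ⟨σ, rfl⟩ := exists_smul_eq G j i
    exact ⟨x ∘ σ, hperm σ σ.2 x hx, rfl⟩
  exact (le i j).antisymm (le j i)

lemma exists_pos_forall_exists_mem_iff_dvd [IsPretransitive G (Fin n)]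
    (hperm : ∀ σ ∈ G, ∀ x ∈ Λ, x ∘ σ ∈ Λ) (hΛ : Λ ≠ ⊥) :
    ∃ s : ℤ, 0 < s ∧ ∀ i c, (∃ x ∈ Λ, x i = c) ↔ s ∣ c := by
  obtain ⟨x, hx, hx₀⟩ := Λ.exists_mem_ne_zero_of_ne_bot hΛ
  obtain ⟨k, hk⟩ := Function.ne_iff.1 hx₀
  let I : Ideal ℤ := Λ.map (LinearMap.proj k)
  have hs (i : Fin n) (c : ℤ) :
      (∃ x ∈ Λ, x i = c) ↔ |Submodule.IsPrincipal.generator I| ∣ c := by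
    rw [abs_dvd, ← Submodule.IsPrincipal.mem_iff_generator_dvd]
    change _ ↔ c ∈ Λ.map (LinearMap.proj k)
    rw [← map_proj_eq_map_proj hperm i k]
    rfl
  refine ⟨_, abs_pos.2 fun hgen ↦ hk ?_, hs⟩
  simpa [hgen] using (hs k (x k)).1 ⟨x, hx, rfl⟩

theorem IsSignedPermInvariant.exists_eq_scl [IsPretransitive G (Fin n)]
    (hinv : IsSignedPermInvariant G Λ) (hΛ : Λ ≠ ⊥) :
    ∃ s : ℤ, 0 < s ∧ ∃ M, Λ = scl s M ∧ IsSignedPermInvariant G M ∧ ∀ i, ∃ y ∈ M, y i = 1 := by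
  obtain ⟨s, hs, hmem⟩ := exists_pos_forall_exists_mem_iff_dvd hinv.comp_mem hΛ
  have hscl : scl s (Λ.comap (s • LinearMap.id)) = Λ :=
    scl_comap_smul_of_forall_dvd fun x hx i ↦ (hmem i _).1 ⟨x, hx, rfl⟩
  refine ⟨s, hs, _, hscl.symm, hinv.comap_smul s, fun i ↦ ?_⟩
  obtain ⟨x, hx, hxi⟩ := (hmem i s).2 dvd_rfl
  rw [← hscl] at hx
  obtain ⟨y, hy, rfl⟩ := hx
  exact ⟨y, hy, mul_left_cancel₀ hs.ne' (by simpa using hxi)⟩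

end Scaling

theorem lattices_invariant_under_C2PGL25_general (hG : IsSetTransitive G (Fin n)) (hΛ : Λ ≠ ⊥)
    (hinv : IsSignedPermInvariant G Λ) :
    ∃ s : ℤ, 0 < s ∧ (Λ = scl s ⊤ ∨ Λ = scl s (Dlat n) ∨ Λ = scl s (sameParity n)) := by
  have := hG.isPretransitive
  obtain ⟨s, hs, M, rfl, hM, hone⟩ := hinv.exists_eq_scl hΛ
  have hodd (i : Fin n) : ∃ y ∈ M, Odd (y i) := by
    obtain ⟨y, hy, hyi⟩ := hone i
    exact ⟨y, hy, hyi ▸ odd_one⟩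
  refine ⟨s, hs, ?_⟩
  obtain rfl | rfl | rfl :=
    eq_top_or_eq_dlat_or_eq_sameParity hG hM.comp_mem (hM.two_smul_mem hone) hodd
  · exact .inl rfl
  · exact .inr (.inl rfl)
  · exact .inr (.inr rfl)

end InvariantLattices

/-- A full-rank lattice `Λ ⊆ ℤ⁶` invariant under `C₂⁶ ⋊ PGL₂(5)` (all sign changes
together with the copy of `PGL₂(5)` in `S₆` permuting the coordinates as the projective
line over `GF(5)`) is `s·ℤ⁶`, `s·D₆` or `s·{x : all coordinates of equal parity}` for
some positive integer `s`. -/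
theorem lattices_invariant_under_C2PGL25 (f : Fin 6 ≃ ProjLine5)
    (Λ : Submodule ℤ (Fin 6 → ℤ)) (hfull : IsFullLattice Λ)
    (hinv : ∀ (v : Fin 6 → ℤˣ) (σ : Perm (Fin 6)), σ ∈ pglSubgroup f →
      ∀ x ∈ Λ, signedPerm v σ x ∈ Λ) :
    ∃ s : ℤ, 0 < s ∧
      (Λ = scl s ⊤ ∨ Λ = scl s (Dlat 6) ∨ Λ = scl s (sameParity 6)) :=
  lattices_invariant_under_C2PGL25_general (pglSubgroup_isSetTransitive f) hfull.ne_bot hinv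
end

section
/- Let n ≥ 4 and suppose Λ is a rank-n lattice invariant under C₂ⁿ ⋊ Sₙ₋₁ (all sign changes together with permutations fixing the last coordinate) such that Λ ∩ {xₙ = 0} equals s·{x ∈ ℤⁿ⁻¹ : all coordinates of equal parity} (embedded in the hyperplane xₙ = 0). Then Λ is a vertical translation lattice with respect to the hyperplane xₙ = 0, i.e. Λ = ⋃_{k∈ℤ} (Λ∩{xₙ=0}) + k·d·eₙ for some d > 0. -/
open Equiv

/-- The copy, inside the coordinate hyperplane `x_{i₀} = 0`, of the lattice of integer
vectors all of whose coordinates have the same parity. -/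
def sameParityHyp (n : ℕ) (i₀ : Fin n) : Submodule ℤ (Fin n → ℤ) where
  carrier := {x | x i₀ = 0 ∧ ∀ i j, i ≠ i₀ → j ≠ i₀ → (2 : ℤ) ∣ (x i - x j)}
  add_mem' := by
    rintro a b ⟨ha0, ha⟩ ⟨hb0, hb⟩
    refine ⟨by simp [ha0, hb0], fun i j hi hj => ?_⟩
    have := dvd_add (ha i j hi hj) (hb i j hi hj)
    simpa [Pi.add_apply, add_sub_add_comm] using this
  zero_mem' := by simp
  smul_mem' := by
    rintro c x ⟨hx0, hx⟩
    refine ⟨by simp [hx0], fun i j hi hj => ?_⟩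
    have := (hx i j hi hj).mul_left c
    simpa [Pi.smul_apply, smul_eq_mul, mul_sub] using this

/-!
A sign change `x ↦ x - 2 xᵢ eᵢ` and a transposition `x ↦ x - (xᵢ - xⱼ)(eᵢ - eⱼ)` move `x ∈ Λ` by a
vector of the slice `xₙ = 0`. When this vector has a further vanishing coordinate, the parity
condition makes all its entries divisible by `2s`; this is where `n ≥ 4` enters. Hence `s ∣ xᵢ` and
`2s ∣ xᵢ - xⱼ`, so `x - xₙ eₙ` lies in the slice and `xₙ eₙ ∈ Λ`. Taking for `d` the positive
generator of the subgroup of `ℤ` formed by the last coordinates of `Λ` concludes.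
-/

theorem mem_iff_exists_sub_smul_mem_inf_ker {R M : Type*} [Ring R] [AddCommGroup M]
    [Module R M] {f : M →ₗ[R] R} {e : M} {Λ : Submodule R M} {d : R} (he : f e = 1)
    (hd : Λ.map f = Ideal.span {d}) (hde : d • e ∈ Λ) (x : M) :
    x ∈ Λ ↔ ∃ k : R, x - (k * d) • e ∈ Λ ⊓ LinearMap.ker f := by
  have hmul (k : R) : (k * d) • e ∈ Λ := mul_smul k d e ▸ Λ.smul_mem k hde
  constructor
  · intro hx
    obtain ⟨k, hk⟩ : ∃ k, k * d = f x :=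
      Ideal.mem_span_singleton'.1 (hd ▸ Submodule.mem_map_of_mem hx)
    exact ⟨k, Λ.sub_mem hx (hmul k), by simp [he, hk]⟩
  · rintro ⟨k, hk, -⟩
    simpa using Λ.add_mem hk (hmul k)

theorem exists_pos_forall_mem_iff_exists_sub_smul_mem_inf_ker {M : Type*} [AddCommGroup M]
    {f : M →ₗ[ℤ] ℤ} {e : M} {Λ : Submodule ℤ M} (he : f e = 1)
    (hΛ : ¬Λ ≤ LinearMap.ker f) (hsmul : ∀ x ∈ Λ, f x • e ∈ Λ) :
    ∃ d : ℤ, 0 < d ∧ ∀ x, x ∈ Λ ↔ ∃ k : ℤ, x - (k * d) • e ∈ Λ ⊓ LinearMap.ker f := by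
  obtain ⟨g, hg⟩ : ∃ g : ℤ, Λ.map f = Ideal.span {g} :=
    (IsPrincipalIdealRing.principal (Λ.map f)).principal
  have hd : Λ.map f = Ideal.span {(g.natAbs : ℤ)} := hg.trans (Int.span_natAbs g).symm
  have hg0 : g ≠ 0 := by
    rintro rfl
    exact hΛ (Submodule.map_le_iff_le_comap.1 (by simp [hg]))
  obtain ⟨y, hy, hfy⟩ : (g.natAbs : ℤ) ∈ Λ.map f := hd ▸ Ideal.mem_span_singleton_self _
  exact ⟨g.natAbs, by positivity,
    mem_iff_exists_sub_smul_mem_inf_ker he hd (hfy ▸ hsmul y hy)⟩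

theorem IsFullLattice.not_le_ker_proj {n : ℕ} {Λ : Submodule ℤ (Fin n → ℤ)}
    (hΛ : IsFullLattice Λ) (i : Fin n) :
    ¬Λ ≤ LinearMap.ker (LinearMap.proj i : (Fin n → ℤ) →ₗ[ℤ] ℤ) := by
  obtain ⟨b, hb, rfl⟩ := hΛ
  intro hle
  have hcol (k : Fin n) : Matrix.of b k i = 0 := hle (Submodule.subset_span ⟨k, rfl⟩)
  have hdet : (Matrix.of b).det ≠ 0 :=
    Matrix.nonsingular_iff_det_ne_zero.1 (.of_linearIndependent_row hb)
  exact hdet (Matrix.det_eq_zero_of_column_eq_zero i hcol)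

section SignedPermutations

variable {n : ℕ}

theorem sub_signedPerm_update_neg_one (i : Fin n) (x : Fin n → ℤ) :
    x - signedPerm (Function.update 1 i (-1)) (Equiv.refl _) x = Pi.single i (2 * x i) := by
  ext k
  rcases eq_or_ne k i with rfl | hk
  · simp [signedPerm, two_mul]
  · simp [signedPerm, hk]

theorem sub_signedPerm_swap {i j : Fin n} (hij : i ≠ j) (x : Fin n → ℤ) :
    x - signedPerm 1 (swap i j) x = Pi.single i (x i - x j) + Pi.single j (x j - x i) := by
  ext k
  rcases eq_or_ne k i with rfl | hki
  · simp [signedPerm, hij]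
  rcases eq_or_ne k j with rfl | hkj
  · simp [signedPerm, hki]
  · simp [signedPerm, hki, hkj, swap_apply_of_ne_of_ne]

end SignedPermutations

section SameParitySlice

variable {n : ℕ} {s : ℤ} {i₀ : Fin n}

theorem mem_scl_sameParityHyp_iff {z : Fin n → ℤ} :
    z ∈ scl s (sameParityHyp n i₀) ↔ z i₀ = 0 ∧ (∀ i ≠ i₀, s ∣ z i) ∧
      ∀ i j, i ≠ i₀ → j ≠ i₀ → 2 * s ∣ z i - z j := by
  constructor
  · rintro ⟨y, ⟨hy₀, hy⟩, rfl⟩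
    refine ⟨by simp [hy₀], fun i _ => by simp, fun i j hi hj => ?_⟩
    simpa [mul_sub, mul_comm 2 s] using mul_dvd_mul_left s (hy i j hi hj)
  · rintro ⟨hz₀, hdvd, hpar⟩
    have hall (i : Fin n) : s ∣ z i := by
      rcases eq_or_ne i i₀ with rfl | hi
      · simp [hz₀]
      · exact hdvd i hi
    rcases eq_or_ne s 0 with rfl | hs
    · have hz : z = 0 := funext fun i => zero_dvd_iff.1 (hall i)
      exact hz ▸ zero_mem _
    · choose y hy using hall
      refine ⟨y, ⟨?_, fun i j hi hj => ?_⟩, funext fun i => by simp [hy]⟩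
      · simpa [hy, hs] using hz₀
      · have h := hpar i j hi hj
        rwa [hy, hy, ← mul_sub, mul_comm 2 s, mul_dvd_mul_iff_left hs] at h

theorem two_mul_dvd_of_mem_scl_sameParityHyp {z : Fin n → ℤ} {i k : Fin n}
    (hz : z ∈ scl s (sameParityHyp n i₀)) (hi : i ≠ i₀) (hk : k ≠ i₀) (hzk : z k = 0) :
    2 * s ∣ z i := by
  simpa [hzk] using (mem_scl_sameParityHyp_iff.1 hz).2.2 i k hi hk

variable {Λ : Submodule ℤ (Fin n → ℤ)}

theorem dvd_apply_of_sign_invariant (hn : 2 < n)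
    (hsign : ∀ v : Fin n → ℤˣ, v i₀ = 1 → ∀ x ∈ Λ, signedPerm v (Equiv.refl _) x ∈ Λ)
    (hslice : Λ ⊓ LinearMap.ker (LinearMap.proj i₀ : (Fin n → ℤ) →ₗ[ℤ] ℤ) ≤
      scl s (sameParityHyp n i₀))
    {x : Fin n → ℤ} (hx : x ∈ Λ) {i : Fin n} (hi : i ≠ i₀) : s ∣ x i := by
  obtain ⟨k, hk₀, hki⟩ := Fin.exists_ne_and_ne_of_two_lt i₀ i hn
  have hmem : (Pi.single i (2 * x i) : Fin n → ℤ) ∈ Λ := by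
    rw [← sub_signedPerm_update_neg_one]
    exact Λ.sub_mem hx (hsign _ (by simp [hi.symm]) x hx)
  have hdvd : 2 * s ∣ (Pi.single i (2 * x i) : Fin n → ℤ) i :=
    two_mul_dvd_of_mem_scl_sameParityHyp (hslice ⟨hmem, by simp [hi.symm]⟩) hi hk₀ (by simp [hki])
  simpa [mul_dvd_mul_iff_left] using hdvd

theorem two_mul_dvd_apply_sub_apply_of_perm_invariant (hn : 3 < n)
    (hperm : ∀ σ : Perm (Fin n), σ i₀ = i₀ → ∀ x ∈ Λ, signedPerm 1 σ x ∈ Λ)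
    (hslice : Λ ⊓ LinearMap.ker (LinearMap.proj i₀ : (Fin n → ℤ) →ₗ[ℤ] ℤ) ≤
      scl s (sameParityHyp n i₀))
    {x : Fin n → ℤ} (hx : x ∈ Λ) {i j : Fin n} (hi : i ≠ i₀) (hj : j ≠ i₀) :
    2 * s ∣ x i - x j := by
  rcases eq_or_ne i j with rfl | hij
  · simp
  obtain ⟨k, hk⟩ : ∃ k, k ∉ ({i₀, i, j} : Finset (Fin n)) := by
    have hcard : ({i₀, i, j} : Finset (Fin n)).card < (Finset.univ : Finset (Fin n)).card := by
      simpa using Finset.card_le_three.trans_lt hn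
    simpa using Finset.exists_mem_notMem_of_card_lt_card hcard
  obtain ⟨hk₀, hki, hkj⟩ : k ≠ i₀ ∧ k ≠ i ∧ k ≠ j := by simpa using hk
  set z : Fin n → ℤ := Pi.single i (x i - x j) + Pi.single j (x j - x i) with hz
  have hmem : z ∈ Λ := by
    rw [hz, ← sub_signedPerm_swap hij]
    exact Λ.sub_mem hx (hperm _ (swap_apply_of_ne_of_ne hi.symm hj.symm) x hx)
  have hdvd : 2 * s ∣ z i :=
    two_mul_dvd_of_mem_scl_sameParityHyp (hslice ⟨hmem, by simp [hz, hi.symm, hj.symm]⟩) hi hk₀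
      (by simp [hz, hki, hkj])
  simpa [hz, hij] using hdvd

theorem apply_smul_single_mem_of_scl_sameParityHyp_slice (hn : 4 ≤ n)
    (hinv : ∀ (v : Fin n → ℤˣ) (σ : Perm (Fin n)), v i₀ = 1 → σ i₀ = i₀ →
      ∀ x ∈ Λ, signedPerm v σ x ∈ Λ)
    (hslice : Λ ⊓ LinearMap.ker (LinearMap.proj i₀ : (Fin n → ℤ) →ₗ[ℤ] ℤ) =
      scl s (sameParityHyp n i₀))
    {x : Fin n → ℤ} (hx : x ∈ Λ) : x i₀ • Pi.single i₀ (1 : ℤ) ∈ Λ := by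
  have hdvd : ∀ i ≠ i₀, s ∣ x i := fun i =>
    dvd_apply_of_sign_invariant (by lia) (fun v hv => hinv v _ hv rfl) hslice.le hx
  have hpar : ∀ i j, i ≠ i₀ → j ≠ i₀ → 2 * s ∣ x i - x j := fun i j =>
    two_mul_dvd_apply_sub_apply_of_perm_invariant hn (fun σ => hinv 1 σ rfl) hslice.le hx
  have hproj : x - x i₀ • Pi.single i₀ (1 : ℤ) ∈ scl s (sameParityHyp n i₀) := by
    refine mem_scl_sameParityHyp_iff.2 ⟨by simp, fun i hi => ?_, fun i j hi hj => ?_⟩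
    · simpa [hi] using hdvd i hi
    · simpa [hi, hj] using hpar i j hi hj
  simpa using Λ.sub_mem hx (hslice.ge hproj).1

theorem lattice_with_same_parity_slice_is_vertical_general (hn : 4 ≤ n)
    (hΛ : ¬Λ ≤ LinearMap.ker (LinearMap.proj i₀ : (Fin n → ℤ) →ₗ[ℤ] ℤ))
    (hinv : ∀ (v : Fin n → ℤˣ) (σ : Perm (Fin n)), v i₀ = 1 → σ i₀ = i₀ →
      ∀ x ∈ Λ, signedPerm v σ x ∈ Λ)
    (hslice : Λ ⊓ LinearMap.ker (LinearMap.proj i₀ : (Fin n → ℤ) →ₗ[ℤ] ℤ) =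
      scl s (sameParityHyp n i₀)) :
    ∃ d : ℤ, 0 < d ∧ ∀ x, x ∈ Λ ↔ ∃ k : ℤ, x - (k * d) • Pi.single i₀ (1 : ℤ) ∈
      Λ ⊓ LinearMap.ker (LinearMap.proj i₀ : (Fin n → ℤ) →ₗ[ℤ] ℤ) :=
  exists_pos_forall_mem_iff_exists_sub_smul_mem_inf_ker (by simp) hΛ fun _ hx =>
    apply_smul_single_mem_of_scl_sameParityHyp_slice hn hinv hslice hx

end SameParitySlice

/-- Let `n ≥ 4` and let `Λ` be a full-rank lattice invariant under `C₂ⁿ ⋊ Sₙ₋₁` (all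
sign changes and the permutations fixing the last coordinate) whose intersection with
the hyperplane `xₙ = 0` is `s` times the same-parity lattice of that hyperplane.  Then
`Λ` is a vertical translation lattice with respect to the hyperplane `xₙ = 0`. -/
theorem lattice_with_same_parity_slice_is_vertical (n : ℕ) (hn : 4 ≤ n)
    (s : ℤ) (hs : 0 < s)
    (Λ : Submodule ℤ (Fin n → ℤ)) (hfull : IsFullLattice Λ)
    (hinv : ∀ (v : Fin n → ℤˣ) (σ : Perm (Fin n)),
      σ (⟨n - 1, by omega⟩ : Fin n) = (⟨n - 1, by omega⟩ : Fin n) →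
      ∀ x ∈ Λ, signedPerm v σ x ∈ Λ)
    (hslice : Λ ⊓ LinearMap.ker (LinearMap.proj (R := ℤ) (φ := fun _ : Fin n => ℤ)
        (⟨n - 1, by omega⟩ : Fin n)) =
      scl s (sameParityHyp n (⟨n - 1, by omega⟩ : Fin n))) :
    ∃ d : ℤ, 0 < d ∧ ∀ x, x ∈ Λ ↔ ∃ k : ℤ,
      x - (k * d) • Pi.single (⟨n - 1, by omega⟩ : Fin n) (1 : ℤ) ∈
        Λ ⊓ LinearMap.ker (LinearMap.proj (R := ℤ) (φ := fun _ : Fin n => ℤ)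
          (⟨n - 1, by omega⟩ : Fin n)) :=
  lattice_with_same_parity_slice_is_vertical_general hn (hfull.not_le_ker_proj _)
    (fun v σ _ => hinv v σ) hslice
end
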